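/- Let n, m₁, m₂ ≥ 1, let Λ ⊂ ℝⁿ be a compact set, let r > 0, let g_{1,1}, …, g_{1,m₁} and g_{2,1}, …, g_{2,m₂} be polynomial functions ℝⁿ → ℝ, set W := {z ∈ Λ : g_{2,j}(z) ≤ 0 for all 1 ≤ j ≤ m₂}, assume W is nonempty, and define V(x) := inf_{w ∈ W} min_{1 ≤ i ≤ m₁} g_{1,i}(x − w). Then for every ε > 0 there exists a polynomial function H : ℝⁿ → ℝ such that sup_{x∈Λ} |V(x) − H(x)| < ε and H(x) < g_{1,i}(x − w) for every x with ‖x‖₂ < r, every w ∈ W, and every 1 ≤ i ≤ m₁. -/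

import Mathlib

/-- A function `ℝⁿ → ℝ` is a polynomial function if it is the evaluation map of some
multivariate polynomial `P ∈ ℝ[x₁,…,xₙ]`. -/
def IsPolynomialFun {n : ℕ} (p : EuclideanSpace ℝ (Fin n) → ℝ) : Prop :=
  ∃ P : MvPolynomial (Fin n) ℝ, ∀ x, p x = MvPolynomial.eval (fun i => x i) P

theorem IsPolynomialFun.continuous_aux {n : ℕ} {p : EuclideanSpace ℝ (Fin n) → ℝ}
    (hp : IsPolynomialFun p) : Continuous p := by
  obtain ⟨P, hP⟩ := hp
  have : p = fun x => MvPolynomial.eval (fun i => x i) P := funext hP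
  rw [this]
  exact (MvPolynomial.continuous_eval P).comp (by fun_prop)

theorem exists_poly_near_aux {n : ℕ} (K : Set (EuclideanSpace ℝ (Fin n))) (hK : IsCompact K)
    (f : EuclideanSpace ℝ (Fin n) → ℝ) (hf : Continuous f) (δ : ℝ) (hδ : 0 < δ) :
    ∃ P : MvPolynomial (Fin n) ℝ,
      ∀ x ∈ K, |MvPolynomial.eval (fun i => x i) P - f x| < δ := by
  haveI : CompactSpace K := isCompact_iff_compactSpace.mp hK
  let c : Fin n → C(K, ℝ) := fun i =>
    ⟨fun x => (x : EuclideanSpace ℝ (Fin n)) i, by fun_prop⟩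
  let φ : MvPolynomial (Fin n) ℝ →ₐ[ℝ] C(K, ℝ) := MvPolynomial.aeval c
  have hφ : ∀ P (x : K), φ P x = MvPolynomial.eval
      (fun i => (x : EuclideanSpace ℝ (Fin n)) i) P := by
    intro P x
    induction P using MvPolynomial.induction_on with
    | C a => simp [φ]
    | add p q hp hq => simp [hp, hq]
    | mul_X p i hp => simp [hp]; left; simp [φ, c]
  have hsep : φ.range.SeparatesPoints := by
    intro x y hxy
    have : ∃ i, (x : EuclideanSpace ℝ (Fin n)) i ≠ (y : EuclideanSpace ℝ (Fin n)) i := by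
      by_contra! h
      exact hxy (Subtype.ext (PiLp.ext h))
    obtain ⟨i, hi⟩ := this
    refine ⟨_, ⟨φ (MvPolynomial.X i), ⟨_, rfl⟩, rfl⟩, ?_⟩
    simpa [hφ] using hi
  obtain ⟨⟨g, ⟨P, hP⟩⟩, hg⟩ :=
    ContinuousMap.exists_mem_subalgebra_near_continuous_of_separatesPoints φ.range hsep
      (fun x : K => f x) (by fun_prop) δ hδ
  refine ⟨P, fun x hx => ?_⟩
  have h := hg ⟨x, hx⟩
  have hP' : φ P = g := hP
  simp only [← hP', hφ, Real.norm_eq_abs] at h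
  exact h

/-- The function `V x = inf_{w ∈ W} min_i g₁ᵢ (x - w)`, with
`W = {z ∈ Λ | ∀ j, g₂ⱼ z ≤ 0}` nonempty and `Λ` compact, can be approximated uniformly on
`Λ` by a polynomial function `H` satisfying `H x < g₁ᵢ (x - w)` for all `x ∈ B_r(0)`,
`w ∈ W` and all `i`. -/
theorem statement_9 (n m₁ m₂ : ℕ) (hn : 1 ≤ n) (hm₁ : 1 ≤ m₁) (hm₂ : 1 ≤ m₂)
    (Λ : Set (EuclideanSpace ℝ (Fin n))) (hΛ : IsCompact Λ)
    (r : ℝ) (hr : 0 < r)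
    (g₁ : Fin m₁ → EuclideanSpace ℝ (Fin n) → ℝ)
    (g₂ : Fin m₂ → EuclideanSpace ℝ (Fin n) → ℝ)
    (hg₁ : ∀ i, IsPolynomialFun (g₁ i)) (hg₂ : ∀ j, IsPolynomialFun (g₂ j))
    (W : Set (EuclideanSpace ℝ (Fin n)))
    (hW : W = {z ∈ Λ | ∀ j : Fin m₂, g₂ j z ≤ 0}) (hWne : W.Nonempty)
    (V : EuclideanSpace ℝ (Fin n) → ℝ)
    (hV : ∀ x, V x = sInf ((fun w => Finset.univ.inf'
      (Finset.univ_nonempty_iff.mpr ⟨⟨0, hm₁⟩⟩) (fun i => g₁ i (x - w))) '' W))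
    (ε : ℝ) (hε : 0 < ε) :
    ∃ H : EuclideanSpace ℝ (Fin n) → ℝ, IsPolynomialFun H ∧
      (⨆ x ∈ Λ, |V x - H x|) < ε ∧
      ∀ x, ‖x‖ < r → ∀ w ∈ W, ∀ i : Fin m₁, H x < g₁ i (x - w) := by
  have hg₁c : ∀ i, Continuous (g₁ i) := fun i => (hg₁ i).continuous_aux
  have hg₂c : ∀ i, Continuous (g₂ i) := fun i => (hg₂ i).continuous_aux
  have hWc : IsCompact W := by
    have : W = Λ ∩ ⋂ j, {z | g₂ j z ≤ 0} := by
      rw [hW]; ext z; simp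
    rw [this]
    exact hΛ.inter_right (isClosed_iInter fun j => isClosed_le (hg₂c j) continuous_const)
  have hne : (Finset.univ : Finset (Fin m₁)).Nonempty :=
    Finset.univ_nonempty_iff.mpr ⟨⟨0, hm₁⟩⟩
  have hF : Continuous (fun q : EuclideanSpace ℝ (Fin n) × EuclideanSpace ℝ (Fin n) =>
      Finset.univ.inf' hne (fun i => g₁ i (q.1 - q.2))) := by
    refine Continuous.finset_inf'_apply hne fun i _ => ?_
    exact (hg₁c i).comp (by fun_prop)
  have hVc : Continuous V := by
    have : V = fun x => sInf ((fun w => Finset.univ.inf' hne (fun i => g₁ i (x - w))) '' W) :=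
      funext hV
    rw [this]
    exact hWc.continuous_sInf hF
  have hVle : ∀ x, ∀ w ∈ W, ∀ i, V x ≤ g₁ i (x - w) := by
    intro x w hw i
    rw [hV x]
    refine (csInf_le ?_ (Set.mem_image_of_mem _ hw)).trans
      (Finset.inf'_le (fun i => g₁ i (x - w)) (Finset.mem_univ i))
    exact (hWc.image (hF.comp (by fun_prop :
      Continuous (fun w : EuclideanSpace ℝ (Fin n) => (x, w))))).bddBelow
  obtain ⟨P, hP⟩ := exists_poly_near_aux (Λ ∪ Metric.closedBall 0 r)
    (hΛ.union (isCompact_closedBall 0 r)) V hVc (ε / 4) (by linarith)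
  refine ⟨fun x => MvPolynomial.eval (fun i => x i) (P - MvPolynomial.C (ε / 3)),
    ⟨_, fun _ => rfl⟩, ?_, ?_⟩
  · refine lt_of_le_of_lt (b := 7 * ε / 12) ?_ (by linarith)
    refine Real.iSup_le (fun x => Real.iSup_le (fun hx => ?_) (by linarith)) (by linarith)
    have h := abs_lt.mp (hP x (Or.inl hx))
    simp only [map_sub, MvPolynomial.eval_C]
    rw [abs_le]
    constructor <;> linarith [h.1, h.2]
  · intro x hx w hw i
    have h := abs_lt.mp (hP x (Or.inr (by simpa using hx.le)))
    have h' := hVle x w hw i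
    simp only [map_sub, MvPolynomial.eval_C]
    linarith [h.1, h.2]
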